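/- Assume F satisfies Assumption F, that μ and σ are bounded, Lipschitz in x uniformly in t and (1/2)-Hölder continuous in t uniformly in x, σ is invertible with bounded inverse, and that g : ℝ^d → ℝ is bounded and Lipschitz. Then there exists a constant C > 0, independent of n, such that for every x ∈ ℝ^d and every grid time t_k = kT/n (k = 0,…,n): |v^h(t_k, x) − g(x)| ≤ C·(T − t_k)^{1/2}. -/

import Mathlib

/-!
Compare the scheme with a mollification `φ` of `g` at scale `ε`, which satisfies `|φ - g| = O(ε)`,
is Lipschitz, and has symmetric second differences `φ (x + z) + φ (x - z) - 2 φ x = O(‖z‖² / ε)`.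

*Consistency.* The law of `W_h` and the weights `1` and `H₂` are even in `W_h`, so `E[φ(X̂_h)]` and
`E[φ(X̂_h) H₂]` only see symmetric second differences of `φ`, while `E[φ(X̂_h) H₁]` only sees its
increments. Hence one step moves `φ` by `O(h (1 + ε + 1 / ε))`.

*Stability.* By the mean value theorem the difference of two steps is the expectation of the
difference of their arguments against a random weight `1 + h (F_r + F_p · H₁ + Tr (F_γ H₂))`.
Since `H₂ = H₁ H₁ᵀ - a⁻¹ / h`, the conditions `Tr (a⁻¹ F_γ) ≤ 1` and `F_p · w + w · F_γ w ≥ -K`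
bound the weight below by `-O(h)`. Its mean is `1 + O(h)`, hence so is its `L¹` norm.

Iterating over the time to maturity `τ = T - t_k` gives an error `O(ε + τ (1 + ε + 1 / ε))`, and the
choice `ε = √τ` yields `O(√τ)`.
-/

open MeasureTheory ProbabilityTheory Matrix Real Set Function

noncomputable section

attribute [local instance] Matrix.normedAddCommGroup Matrix.normedSpace

abbrev Vec (d : ℕ) := Fin d → ℝ
abbrev Mat (d : ℕ) := Matrix (Fin d) (Fin d) ℝ

/-- Law of the Gaussian vector `W_h` in `ℝ^d`, centered with covariance `h · I_d`. -/
def gaussVec (d : ℕ) (h : ℝ) : Measure (Vec d) :=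
  Measure.pi fun _ => gaussianReal 0 h.toNNReal

/-- One step Euler scheme `X̂_h^{t,x} = x + μ(t,x) h + σ(t,x) W_h`. -/
def euler {d : ℕ} (μ : ℝ → Vec d → Vec d) (σ : ℝ → Vec d → Mat d)
    (h t : ℝ) (x w : Vec d) : Vec d :=
  x + h • μ t x + (σ t x).mulVec w

/-- Weight `H_1^h(t,x) = (σ(t,x)ᵀ)⁻¹ W_h / h`. -/
def H1w {d : ℕ} (σ : ℝ → Vec d → Mat d) (h t : ℝ) (x w : Vec d) : Vec d :=
  (1 / h) • ((σ t x)ᵀ⁻¹.mulVec w)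

/-- Weight `H_2^h(t,x) = (σ(t,x)ᵀ)⁻¹ (W_h W_hᵀ − h I_d) σ(t,x)⁻¹ / h²`. -/
def H2w {d : ℕ} (σ : ℝ → Vec d → Mat d) (h t : ℝ) (x w : Vec d) : Mat d :=
  (1 / h ^ 2) • ((σ t x)ᵀ⁻¹ * (vecMulVec w w - h • (1 : Mat d)) * (σ t x)⁻¹)

/-- One-step operator acting on the next-time function `ψ`. -/
def step {d : ℕ} (F : ℝ → Vec d → ℝ → Vec d → Mat d → ℝ)
    (μ : ℝ → Vec d → Vec d) (σ : ℝ → Vec d → Mat d)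
    (h t : ℝ) (ψ : Vec d → ℝ) (x : Vec d) : ℝ :=
  (∫ w, ψ (euler μ σ h t x w) ∂gaussVec d h)
    + h * F t x (∫ w, ψ (euler μ σ h t x w) ∂gaussVec d h)
        (fun i => ∫ w, ψ (euler μ σ h t x w) * H1w σ h t x w i ∂gaussVec d h)
        (Matrix.of fun i j => ∫ w, ψ (euler μ σ h t x w) * H2w σ h t x w i j ∂gaussVec d h)

/-- The operator `T_h[ψ](t,x)`. -/
def Th {d : ℕ} (F : ℝ → Vec d → ℝ → Vec d → Mat d → ℝ)
    (μ : ℝ → Vec d → Vec d) (σ : ℝ → Vec d → Mat d)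
    (ψ : ℝ → Vec d → ℝ) (h t : ℝ) (x : Vec d) : ℝ :=
  step F μ σ h t (ψ (t + h)) x

/-- Assumption F of the paper, with explicit partial derivatives `Fr, Fp, Fγ` of `F`
in the variables `(r,p,γ)`. -/
structure AssumptionF (d : ℕ) (σ : ℝ → Vec d → Mat d)
    (F : ℝ → Vec d → ℝ → Vec d → Mat d → ℝ)
    (Fr : ℝ → Vec d → ℝ → Vec d → Mat d → ℝ)
    (Fp : ℝ → Vec d → ℝ → Vec d → Mat d → Vec d)
    (Fγ : ℝ → Vec d → ℝ → Vec d → Mat d → Mat d) : Prop where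
  lipschitz : ∃ L : ℝ, 0 ≤ L ∧ ∀ t x x' r r' p p' γ γ',
    |F t x r p γ - F t x' r' p' γ'| ≤ L * (‖x - x'‖ + |r - r'| + ‖p - p'‖ + ‖γ - γ'‖)
  bound_at_zero : ∃ C : ℝ, ∀ t x, |F t x 0 0 0| ≤ C
  differentiable : ∀ t x r p γ, DifferentiableAt ℝ
    (fun q : ℝ × Vec d × Mat d => F t x q.1 q.2.1 q.2.2) (r, p, γ)
  deriv_eq : ∀ t x r p γ (dq : ℝ × Vec d × Mat d),
    fderiv ℝ (fun q : ℝ × Vec d × Mat d => F t x q.1 q.2.1 q.2.2) (r, p, γ) dq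
      = Fr t x r p γ * dq.1 + Fp t x r p γ ⬝ᵥ dq.2.1
        + ∑ i, ∑ j, Fγ t x r p γ i j * dq.2.2 i j
  psd : ∀ t x r p γ, (Fγ t x r p γ).PosSemidef
  trace_le_one : ∀ t x r p γ, ((σ t x * (σ t x)ᵀ)⁻¹ * Fγ t x r p γ).trace ≤ 1
  lower_bound : ∃ K : ℝ, 0 ≤ K ∧ ∀ t x r p γ (w : Vec d),
    Fp t x r p γ ⬝ᵥ w + w ⬝ᵥ (Fγ t x r p γ).mulVec w ≥ -K

/-- The backward scheme: `schemeAux … k` is the approximation with `k` time steps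
remaining before the horizon `T` (so it corresponds to time `T − k·(T/n)`). -/
def schemeAux {d : ℕ} (T : ℝ) (F : ℝ → Vec d → ℝ → Vec d → Mat d → ℝ)
    (μ : ℝ → Vec d → Vec d) (σ : ℝ → Vec d → Mat d) (g : Vec d → ℝ) (n : ℕ) :
    ℕ → Vec d → ℝ
  | 0 => g
  | (k + 1) => step F μ σ (T / n) (T - (k + 1) * (T / n)) (schemeAux T F μ σ g n k)

/-- The discrete time approximation `v^h(t_i, ·)` with `h = T/n` and `t_i = i·T/n`:
`v^h(t_n,·) = g` and `v^h(t_i,·) = T_h[v^h](t_i,·)`. -/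
def vh {d : ℕ} (T : ℝ) (F : ℝ → Vec d → ℝ → Vec d → Mat d → ℝ)
    (μ : ℝ → Vec d → Vec d) (σ : ℝ → Vec d → Mat d) (g : Vec d → ℝ) (n i : ℕ) :
    Vec d → ℝ :=
  schemeAux T F μ σ g n (n - i)

/-! ### Mollification of Lipschitz functions -/

open scoped NNReal

section Mollification

open scoped Convolution

variable {E : Type*} [NormedAddCommGroup E]

/-- `φ` has second symmetric differences at most `M ‖z‖²`. This stands in for a bound on the second
derivative of `φ`; it is tested directly against a symmetric law, with no Taylor expansion. -/
def HasSecondDiffBound (M : ℝ) (φ : E → ℝ) : Prop :=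
  ∀ y z, |φ (y + z) + φ (y - z) - 2 * φ y| ≤ M * ‖z‖ ^ 2

theorem lipschitzWith_convolution [MeasurableSpace E] {ν : Measure E} {V W Z : Type*}
    [NormedAddCommGroup V] [NormedSpace ℝ V] [NormedAddCommGroup W] [NormedSpace ℝ W]
    [NormedAddCommGroup Z] [NormedSpace ℝ Z] (B : V →L[ℝ] W →L[ℝ] Z) {f : E → V} {g : E → W}
    {K C : ℝ≥0} (hf : Integrable f ν) (hg : LipschitzWith K g) (hfg : ConvolutionExists f g B ν)
    (hC : ‖B‖ * ∫ t, ‖f t‖ ∂ν ≤ C) : LipschitzWith (C * K) (f ⋆[B, ν] g) := by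
  refine LipschitzWith.of_dist_le_mul fun x y => ?_
  have pointwise : ∀ t, ‖B (f t) (g (x - t)) - B (f t) (g (y - t))‖
      ≤ ‖f t‖ * (‖B‖ * (K * dist x y)) := fun t => by
    have hgt : ‖g (x - t) - g (y - t)‖ ≤ K * dist x y := by
      simpa only [dist_eq_norm, sub_sub_sub_cancel_right] using hg.dist_le_mul (x - t) (y - t)
    calc ‖B (f t) (g (x - t)) - B (f t) (g (y - t))‖
        = ‖B (f t) (g (x - t) - g (y - t))‖ := by rw [map_sub]
      _ ≤ ‖B‖ * ‖f t‖ * (K * dist x y) := (B.le_opNorm₂ _ _).trans (by gcongr)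
      _ = ‖f t‖ * (‖B‖ * (K * dist x y)) := by ring
  rw [dist_eq_norm, convolution_def, convolution_def, ← integral_sub (hfg x) (hfg y)]
  calc ‖∫ t, (B (f t) (g (x - t)) - B (f t) (g (y - t))) ∂ν‖
      ≤ ∫ t, ‖f t‖ * (‖B‖ * (K * dist x y)) ∂ν :=
        norm_integral_le_of_norm_le (hf.norm.mul_const _) (ae_of_all _ pointwise)
    _ = ‖B‖ * (∫ t, ‖f t‖ ∂ν) * (K * dist x y) := by rw [integral_mul_const]; ring
    _ ≤ C * (K * dist x y) := by gcongr
    _ = (C * K : ℝ≥0) * dist x y := by push_cast; ring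

variable [NormedSpace ℝ E]

theorem hasSecondDiffBound_of_lipschitzWith_fderiv {φ : E → ℝ} {M : ℝ≥0}
    (hφ : Differentiable ℝ φ) (hφ' : LipschitzWith M (fderiv ℝ φ)) : HasSecondDiffBound M φ := by
  intro y z
  have hderiv : ∀ u, HasFDerivAt (fun u => φ (u + z) - φ u) (fderiv ℝ φ (u + z) - fderiv ℝ φ u) u :=
    fun u => ((hasFDerivAt_comp_add_right z).2 (hφ (u + z)).hasFDerivAt).sub (hφ u).hasFDerivAt
  have hbound : ∀ u, ‖fderiv ℝ φ (u + z) - fderiv ℝ φ u‖ ≤ M * ‖z‖ := fun u => by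
    simpa [dist_eq_norm] using hφ'.dist_le_mul (u + z) u
  have hmvt := convex_univ.norm_image_sub_le_of_norm_hasFDerivWithin_le
    (fun u _ => (hderiv u).hasFDerivWithinAt) (fun u _ => hbound u) (mem_univ (y - z)) (mem_univ y)
  rw [sub_add_cancel, sub_sub_cancel, Real.norm_eq_abs] at hmvt
  calc |φ (y + z) + φ (y - z) - 2 * φ y| = |φ (y + z) - φ y - (φ y - φ (y - z))| := by ring_nf
    _ ≤ M * ‖z‖ * ‖z‖ := hmvt
    _ = M * ‖z‖ ^ 2 := by ring

theorem HasSecondDiffBound.comp_smul {φ : E → ℝ} {M : ℝ} (hφ : HasSecondDiffBound M φ) (r : ℝ) :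
    HasSecondDiffBound (M * r ^ 2) fun x => φ (r • x) := fun y z => by
  simpa only [smul_add, smul_sub, norm_smul, mul_pow, Real.norm_eq_abs, sq_abs, mul_assoc]
    using hφ (r • y) (r • z)

variable (E) [FiniteDimensional ℝ E]

theorem exists_unit_mollification : ∃ c : ℝ≥0, ∀ (L : ℝ≥0) (g : E → ℝ), LipschitzWith L g →
    ∃ φ : E → ℝ, LipschitzWith L φ ∧ (∀ x, |φ x - g x| ≤ 2 * L) ∧
      HasSecondDiffBound (c * L) φ := by
  borelize E
  let ν : Measure E := Measure.addHaar
  let b : ContDiffBump (0 : E) := ⟨1, 2, one_pos, one_lt_two⟩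
  let ρ : E → ℝ := b.normed ν
  let B := ContinuousLinearMap.lsmul ℝ ℝ (E := ℝ)
  have hB : ‖B‖ ≤ 1 := ContinuousLinearMap.opNorm_lsmul_le
  have hsupp : HasCompactSupport ρ := b.hasCompactSupport_normed
  have hsmooth : ContDiff ℝ 1 ρ := b.contDiff_normed
  have hsupp' : HasCompactSupport (fderiv ℝ ρ) := hsupp.fderiv ℝ
  have hcont' : Continuous (fderiv ℝ ρ) := hsmooth.continuous_fderiv one_ne_zero
  obtain ⟨c, hc⟩ : ∃ c : ℝ≥0, ∫ t, ‖fderiv ℝ ρ t‖ ∂ν ≤ c := ⟨_, Real.le_coe_toNNReal _⟩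
  refine ⟨c, fun L g hg => ⟨ρ ⋆[B, ν] g, ?_, fun x => ?_, ?_⟩⟩
  · have hmass : ∫ t, ‖ρ t‖ ∂ν = 1 := by
      simp only [ρ, Real.norm_of_nonneg (b.nonneg_normed _), b.integral_normed]
    simpa only [one_mul] using lipschitzWith_convolution B (C := 1)
      (hsmooth.continuous.integrable_of_hasCompactSupport hsupp) hg
      (hsupp.convolutionExists_left B hsmooth.continuous hg.continuous.locallyIntegrable)
      (by rw [hmass, mul_one]; exact hB)
  · refine b.dist_normed_convolution_le hg.continuous.aestronglyMeasurable fun y hy => ?_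
    calc dist (g y) (g x) ≤ L * dist y x := hg.dist_le_mul y x
      _ ≤ L * 2 := by gcongr; exact (Metric.mem_ball.1 hy).le
      _ = 2 * L := mul_comm _ _
  · have hderiv : ∀ x, HasFDerivAt (ρ ⋆[B, ν] g) ((fderiv ℝ ρ ⋆[B.precompL E, ν] g) x) x :=
      hsupp.hasFDerivAt_convolution_left B hsmooth hg.continuous.locallyIntegrable
    rw [← NNReal.coe_mul]
    refine hasSecondDiffBound_of_lipschitzWith_fderiv (fun x => (hderiv x).differentiableAt) ?_
    rw [show fderiv ℝ (ρ ⋆[B, ν] g) = _ from funext fun x => (hderiv x).fderiv]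
    refine lipschitzWith_convolution (B.precompL E)
      (hcont'.integrable_of_hasCompactSupport hsupp') hg
      (hsupp'.convolutionExists_left _ hcont' hg.continuous.locallyIntegrable) ?_
    exact (mul_le_of_le_one_left (by positivity) ((B.norm_precompL_le E).trans hB)).trans hc

theorem exists_mollification : ∃ c : ℝ≥0, ∀ (L : ℝ≥0) (g : E → ℝ), LipschitzWith L g →
    ∀ ε : ℝ, 0 < ε → ∃ φ : E → ℝ, LipschitzWith L φ ∧ (∀ x, |φ x - g x| ≤ 2 * L * ε) ∧
      HasSecondDiffBound (c * L / ε) φ := by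
  obtain ⟨c, hc⟩ := exists_unit_mollification E
  refine ⟨c, fun L g hg ε hε => ?_⟩
  obtain ⟨φ, hlip, hclose, hdiff⟩ := hc (L * ‖ε‖₊) _ (hg.comp (lipschitzWith_smul ε))
  have hscale : ((L * ‖ε‖₊ : ℝ≥0) : ℝ) = L * ε := by simp [abs_of_pos hε]
  rw [hscale] at hclose hdiff
  refine ⟨fun x => φ (ε⁻¹ • x), ?_, fun x => ?_, ?_⟩
  · have := hlip.comp (lipschitzWith_smul (β := E) ε⁻¹)
    rwa [nnnorm_inv, mul_inv_cancel_right₀ (nnnorm_ne_zero_iff.2 hε.ne')] at this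
  · simpa only [Function.comp_apply, smul_inv_smul₀ hε.ne', mul_assoc] using hclose (ε⁻¹ • x)
  · convert hdiff.comp_smul ε⁻¹ using 1
    field_simp

end Mollification

/-! ### The entrywise sup norm of matrices -/

section SupNorm

variable {l m n R : Type*} [Fintype l] [Fintype m] [Fintype n] [NonUnitalNormedRing R]

theorem norm_dotProduct_le_card_mul (v w : n → R) :
    ‖v ⬝ᵥ w‖ ≤ Fintype.card n * (‖v‖ * ‖w‖) := by
  have hterm : ∀ i ∈ Finset.univ, ‖v i * w i‖ ≤ ‖v‖ * ‖w‖ := fun i _ =>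
    norm_mul_le_of_le (norm_le_pi_norm v i) (norm_le_pi_norm w i)
  refine (norm_sum_le_of_le _ hterm).trans_eq ?_
  rw [Finset.sum_const, Finset.card_univ, nsmul_eq_mul]

theorem norm_mulVec_le_card_mul (A : Matrix m n R) (v : n → R) :
    ‖A *ᵥ v‖ ≤ Fintype.card n * (‖A‖ * ‖v‖) := by
  refine (pi_norm_le_iff_of_nonneg (by positivity)).2 fun i => ?_
  refine (norm_dotProduct_le_card_mul (A i) v).trans ?_
  gcongr
  exact norm_le_pi_norm A i

theorem norm_matrix_mul_le_card_mul (A : Matrix l m R) (B : Matrix m n R) :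
    ‖A * B‖ ≤ Fintype.card m * (‖A‖ * ‖B‖) := by
  refine (Matrix.norm_le_iff (by positivity)).2 fun i j => ?_
  refine (norm_dotProduct_le_card_mul (A i) fun k => B k j).trans ?_
  gcongr
  · exact norm_le_pi_norm A i
  · exact (pi_norm_le_iff_of_nonneg (norm_nonneg B)).2 fun k =>
      Matrix.norm_entry_le_entrywise_sup_norm B

theorem norm_vecMulVec_le (v : m → R) (w : n → R) : ‖vecMulVec v w‖ ≤ ‖v‖ * ‖w‖ :=
  (Matrix.norm_le_iff (by positivity)).2 fun i j =>
    norm_mul_le_of_le (norm_le_pi_norm v i) (norm_le_pi_norm w j)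

theorem norm_one_matrix_le [DecidableEq n] : ‖(1 : Matrix n n ℝ)‖ ≤ 1 := by
  refine (Matrix.norm_le_iff zero_le_one).2 fun i j => ?_
  rw [Matrix.one_apply]
  split_ifs <;> simp

theorem norm_inv_transpose [DecidableEq n] (A : Matrix n n ℝ) : ‖Aᵀ⁻¹‖ = ‖A⁻¹‖ := by
  rw [← Matrix.transpose_nonsing_inv, Matrix.norm_transpose]

end SupNorm

/-! ### Symmetric laws and Gaussian moments -/

section SymmetricLaw

variable {E : Type*} [MeasurableSpace E]

theorem integral_eq_zero_of_odd [AddGroup E] [MeasurableNeg E] {ν : Measure E} [ν.IsNegInvariant]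
    {f : E → ℝ} (hf : ∀ w, f (-w) = -f w) : ∫ w, f w ∂ν = 0 := by
  have h := integral_neg_eq_self f ν
  simp only [hf, integral_neg] at h
  linarith

variable [NormedAddCommGroup E] [BorelSpace E] {ν : Measure E} [ν.IsNegInvariant]

/-- Symmetry of `ν` and `H` turns the increment `φ (y + A w) - φ y` into half a second difference,
so no first-order term appears. -/
theorem abs_integral_mul_sub_le_of_even {V : Type*} [NormedAddCommGroup V] {φ : V → ℝ} {M B a : ℝ}
    (hφ : Continuous φ) (hφB : ∀ x, |φ x| ≤ B) (hM : 0 ≤ M) (hdiff : HasSecondDiffBound M φ)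
    {A : E → V} (hA : Continuous A) (hAodd : ∀ w, A (-w) = -A w) (hAa : ∀ w, ‖A w‖ ≤ a * ‖w‖)
    {H : E → ℝ} (hH : Integrable H ν) (heven : ∀ w, H (-w) = H w)
    (hmom : Integrable (fun w => ‖w‖ ^ 2 * |H w|) ν) (y : V) :
    |∫ w, φ (y + A w) * H w ∂ν - φ y * ∫ w, H w ∂ν|
      ≤ M * a ^ 2 / 2 * ∫ w, ‖w‖ ^ 2 * |H w| ∂ν := by
  have hint : Integrable (fun w => φ (y + A w) * H w) ν :=
    hH.bdd_mul (Continuous.aestronglyMeasurable (by fun_prop)) (ae_of_all _ fun w => hφB _)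
  have hneg : Integrable (fun w => φ (y - A w) * H w) ν := by
    simpa only [hAodd, heven, ← sub_eq_add_neg] using hint.comp_neg
  have hadd : Integrable (fun w => φ (y + A w) * H w + φ (y - A w) * H w) ν := hint.add hneg
  have hsymm : ∫ w, φ (y - A w) * H w ∂ν = ∫ w, φ (y + A w) * H w ∂ν := by
    rw [← integral_neg_eq_self]
    simp only [hAodd, heven, sub_neg_eq_add]
  have hsum : ∫ w, (φ (y + A w) + φ (y - A w) - 2 * φ y) * H w ∂ν
      = 2 * (∫ w, φ (y + A w) * H w ∂ν - φ y * ∫ w, H w ∂ν) := by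
    simp only [sub_mul, add_mul]
    rw [integral_sub hadd (hH.const_mul _), integral_add hint hneg, hsymm,
      integral_const_mul]
    ring
  have hbound : ∀ w, ‖(φ (y + A w) + φ (y - A w) - 2 * φ y) * H w‖
      ≤ M * a ^ 2 * (‖w‖ ^ 2 * |H w|) := fun w => by
    calc ‖(φ (y + A w) + φ (y - A w) - 2 * φ y) * H w‖ ≤ M * ‖A w‖ ^ 2 * |H w| := by
          rw [norm_mul, Real.norm_eq_abs, Real.norm_eq_abs]
          gcongr
          exact hdiff y (A w)
      _ ≤ M * (a * ‖w‖) ^ 2 * |H w| := by gcongr; exact hAa w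
      _ = M * a ^ 2 * (‖w‖ ^ 2 * |H w|) := by ring
  have htwice : 2 * |∫ w, φ (y + A w) * H w ∂ν - φ y * ∫ w, H w ∂ν|
      ≤ M * a ^ 2 * ∫ w, ‖w‖ ^ 2 * |H w| ∂ν := by
    calc 2 * |∫ w, φ (y + A w) * H w ∂ν - φ y * ∫ w, H w ∂ν|
        = ‖∫ w, (φ (y + A w) + φ (y - A w) - 2 * φ y) * H w ∂ν‖ := by
          rw [hsum, Real.norm_eq_abs, abs_mul, abs_two]
      _ ≤ ∫ w, M * a ^ 2 * (‖w‖ ^ 2 * |H w|) ∂ν :=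
          norm_integral_le_of_norm_le (hmom.const_mul _) (ae_of_all _ hbound)
      _ = M * a ^ 2 * ∫ w, ‖w‖ ^ 2 * |H w| ∂ν := integral_const_mul _ _
  linarith

end SymmetricLaw

section Gaussian

instance isNegInvariant_gaussianReal (v : ℝ≥0) : (gaussianReal 0 v).IsNegInvariant :=
  ⟨gaussianReal_map_neg.trans (by rw [neg_zero])⟩

variable {d : ℕ}

instance isProbabilityMeasure_gaussVec (h : ℝ) : IsProbabilityMeasure (gaussVec d h) := by
  unfold gaussVec; infer_instance

instance isNegInvariant_gaussVec (h : ℝ) : (gaussVec d h).IsNegInvariant := by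
  unfold gaussVec; infer_instance

theorem measurePreserving_eval_gaussVec (h : ℝ) (i : Fin d) :
    MeasurePreserving (Function.eval i) (gaussVec d h) (gaussianReal 0 h.toNNReal) :=
  measurePreserving_eval _ i

theorem integrable_norm_pow_gaussVec (h : ℝ) (m : ℕ) :
    Integrable (fun w => ‖w‖ ^ m) (gaussVec d h) := by
  have hmem : MemLp id m (gaussVec d h) := MemLp.of_eval fun i =>
    (memLp_id_gaussianReal m).comp_measurePreserving (measurePreserving_eval_gaussVec h i)
  exact hmem.integrable_norm_pow'

theorem gaussVec_eq_map_smul {h : ℝ} (hh : 0 ≤ h) :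
    gaussVec d h = (gaussVec d 1).map (√h • ·) := by
  have hscale : gaussianReal 0 h.toNNReal = (gaussianReal 0 (1 : ℝ).toNNReal).map (√h * ·) := by
    rw [gaussianReal_map_const_mul]
    congr 1
    · rw [mul_zero]
    · ext; simp [Real.sq_sqrt hh, hh]
  have (_ : Fin d) : SigmaFinite ((gaussianReal 0 (1 : ℝ).toNNReal).map (√h * ·)) :=
    hscale ▸ inferInstance
  unfold gaussVec
  rw [hscale, ← Measure.pi_map_pi (by fun_prop)]
  rfl

theorem integral_norm_pow_gaussVec {h : ℝ} (hh : 0 ≤ h) (m : ℕ) :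
    ∫ w, ‖w‖ ^ m ∂gaussVec d h = √h ^ m * ∫ w, ‖w‖ ^ m ∂gaussVec d 1 := by
  rw [gaussVec_eq_map_smul hh, integral_map (by fun_prop) (by fun_prop), ← integral_const_mul]
  simp only [norm_smul, Real.norm_of_nonneg (Real.sqrt_nonneg h), mul_pow]

theorem integrable_apply_mul_apply_gaussVec (h : ℝ) (i j : Fin d) :
    Integrable (fun w => w i * w j) (gaussVec d h) := by
  refine (integrable_norm_pow_gaussVec h 2).mono' (by fun_prop) (ae_of_all _ fun w => ?_)
  rw [sq]
  exact norm_mul_le_of_le (norm_le_pi_norm w i) (norm_le_pi_norm w j)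

theorem integral_apply_mul_apply_gaussVec {h : ℝ} (hh : 0 ≤ h) (i j : Fin d) :
    ∫ w, w i * w j ∂gaussVec d h = h * (1 : Mat d) i j := by
  rcases eq_or_ne i j with rfl | hij
  · have hvar := variance_id_gaussianReal (μ := 0) (v := h.toNNReal)
    rw [variance_of_integral_eq_zero (by fun_prop) (by simp), Real.coe_toNNReal h hh] at hvar
    calc ∫ w, w i * w i ∂gaussVec d h = ∫ y, y * y ∂gaussianReal 0 h.toNNReal :=
          integral_comp_eval (μ := fun _ : Fin d => gaussianReal 0 h.toNNReal) (i := i)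
            (f := fun y : ℝ => y * y) (by fun_prop)
      _ = h := by simpa only [id, sq] using hvar
      _ = h * (1 : Mat d) i i := by rw [Matrix.one_apply_eq, mul_one]
  · have hindep : iIndepFun (fun (k : Fin d) (w : Vec d) => w k) (gaussVec d h) :=
      iIndepFun_pi (X := fun _ (y : ℝ) => y) (fun _ => by fun_prop)
    rw [(hindep.indepFun hij).integral_fun_mul_eq_mul_integral
        (measurable_pi_apply i).aestronglyMeasurable (measurable_pi_apply j).aestronglyMeasurable,
      integral_eq_zero_of_odd fun w => Pi.neg_apply w i, zero_mul, Matrix.one_apply_ne hij,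
      mul_zero]

end Gaussian

/-! ### The Malliavin weights -/

section Weights

variable {d : ℕ} (σ : ℝ → Vec d → Mat d) (h t : ℝ) (x : Vec d)

theorem H1w_neg (w : Vec d) : H1w σ h t x (-w) = -H1w σ h t x w := by
  rw [H1w, H1w, Matrix.mulVec_neg, smul_neg]

theorem H2w_neg (w : Vec d) : H2w σ h t x (-w) = H2w σ h t x w := by
  rw [H2w, H2w, Matrix.neg_vecMulVec, Matrix.vecMulVec_neg, neg_neg]

theorem H2w_eq_vecMulVec_sub {h : ℝ} (hh : h ≠ 0) (w : Vec d) :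
    H2w σ h t x w
      = vecMulVec (H1w σ h t x w) (H1w σ h t x w) - (1 / h) • (σ t x * (σ t x)ᵀ)⁻¹ := by
  have hvec : w ᵥ* (σ t x)⁻¹ = (σ t x)ᵀ⁻¹ *ᵥ w := by
    rw [← Matrix.transpose_nonsing_inv, Matrix.mulVec_transpose]
  have hsq : h * (1 / h ^ 2) = 1 / h := by field_simp
  rw [H2w, H1w, Matrix.mul_sub, Matrix.sub_mul, Matrix.mul_vecMulVec, Matrix.vecMulVec_mul, hvec,
    Matrix.mul_smul, Matrix.smul_mul, Matrix.mul_one, ← Matrix.mul_inv_rev, smul_sub, smul_smul,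
    Matrix.smul_vecMulVec, Matrix.vecMulVec_smul, smul_smul, mul_comm (1 / h ^ 2) h, hsq, ← sq,
    _root_.one_div_pow]

theorem norm_H1w_le {h : ℝ} (hh : 0 ≤ h) (w : Vec d) :
    ‖H1w σ h t x w‖ ≤ d * ‖(σ t x)⁻¹‖ / h * ‖w‖ :=
  calc ‖H1w σ h t x w‖ = 1 / h * ‖(σ t x)ᵀ⁻¹ *ᵥ w‖ := by
        rw [H1w, norm_smul, Real.norm_of_nonneg (by positivity)]
    _ ≤ 1 / h * (d * (‖(σ t x)⁻¹‖ * ‖w‖)) := by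
        gcongr
        simpa only [Fintype.card_fin, norm_inv_transpose] using
          norm_mulVec_le_card_mul (σ t x)ᵀ⁻¹ w
    _ = d * ‖(σ t x)⁻¹‖ / h * ‖w‖ := by ring

theorem norm_H2w_le {h : ℝ} (hh : 0 ≤ h) (w : Vec d) :
    ‖H2w σ h t x w‖ ≤ (d * ‖(σ t x)⁻¹‖ / h) ^ 2 * (‖w‖ ^ 2 + h) := by
  have hmid : ‖vecMulVec w w - h • (1 : Mat d)‖ ≤ ‖w‖ ^ 2 + h := by
    refine (norm_sub_le _ _).trans (add_le_add ?_ ?_)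
    · exact (norm_vecMulVec_le w w).trans_eq (sq _).symm
    · rw [norm_smul, Real.norm_of_nonneg hh]
      exact mul_le_of_le_one_right hh norm_one_matrix_le
  calc ‖H2w σ h t x w‖
      = 1 / h ^ 2 * ‖(σ t x)ᵀ⁻¹ * (vecMulVec w w - h • (1 : Mat d)) * (σ t x)⁻¹‖ := by
        rw [H2w, norm_smul, Real.norm_of_nonneg (by positivity)]
    _ ≤ 1 / h ^ 2 * (d * (d * (‖(σ t x)ᵀ⁻¹‖ * ‖vecMulVec w w - h • (1 : Mat d)‖)
          * ‖(σ t x)⁻¹‖)) := by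
        gcongr
        refine (norm_matrix_mul_le_card_mul _ _).trans ?_
        rw [Fintype.card_fin]
        gcongr
        simpa only [Fintype.card_fin] using norm_matrix_mul_le_card_mul (σ t x)ᵀ⁻¹ _
    _ ≤ 1 / h ^ 2 * (d * (d * (‖(σ t x)⁻¹‖ * (‖w‖ ^ 2 + h)) * ‖(σ t x)⁻¹‖)) := by
        rw [norm_inv_transpose]
        gcongr
    _ = (d * ‖(σ t x)⁻¹‖ / h) ^ 2 * (‖w‖ ^ 2 + h) := by ring

theorem integrable_H1w (i : Fin d) : Integrable (fun w => H1w σ h t x w i) (gaussVec d h) := by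
  have hcoord (k : Fin d) : Integrable (fun w => w k) (gaussVec d h) :=
    ((memLp_id_gaussianReal 1).comp_measurePreserving
      (measurePreserving_eval_gaussVec h k)).integrable le_rfl
  simp only [H1w, Pi.smul_apply, Matrix.mulVec, dotProduct, smul_eq_mul]
  exact (integrable_finsetSum _ fun k _ => (hcoord k).const_mul _).const_mul _

theorem integral_H1w (i : Fin d) : ∫ w, H1w σ h t x w i ∂gaussVec d h = 0 :=
  integral_eq_zero_of_odd fun w => by rw [H1w_neg, Pi.neg_apply]

theorem integrable_vecMulVec_sub_gaussVec (k l : Fin d) :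
    Integrable (fun w => (vecMulVec w w - h • (1 : Mat d)) k l) (gaussVec d h) :=
  (integrable_apply_mul_apply_gaussVec h k l).sub (integrable_const _)

theorem integral_vecMulVec_sub_gaussVec {h : ℝ} (hh : 0 ≤ h) (k l : Fin d) :
    ∫ w, (vecMulVec w w - h • (1 : Mat d)) k l ∂gaussVec d h = 0 := by
  simp only [Matrix.sub_apply, Matrix.smul_apply, vecMulVec_apply, smul_eq_mul]
  rw [integral_sub (integrable_apply_mul_apply_gaussVec h k l) (integrable_const _),
    integral_apply_mul_apply_gaussVec hh, integral_const, probReal_univ, one_smul, sub_self]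

theorem integrable_H2w (i j : Fin d) :
    Integrable (fun w => H2w σ h t x w i j) (gaussVec d h) := by
  simp only [H2w, Matrix.smul_apply, Matrix.mul_apply, smul_eq_mul]
  exact (integrable_finsetSum _ fun l _ => (integrable_finsetSum _ fun k _ =>
    (integrable_vecMulVec_sub_gaussVec h k l).const_mul _).mul_const _).const_mul _

theorem integral_H2w {h : ℝ} (hh : 0 ≤ h) (i j : Fin d) :
    ∫ w, H2w σ h t x w i j ∂gaussVec d h = 0 := by
  have hrow (l : Fin d) (k : Fin d) : Integrable (fun w =>
      (σ t x)ᵀ⁻¹ i k * (vecMulVec w w - h • (1 : Mat d)) k l) (gaussVec d h) :=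
    (integrable_vecMulVec_sub_gaussVec h k l).const_mul _
  simp only [H2w, Matrix.smul_apply, Matrix.mul_apply, smul_eq_mul]
  rw [integral_const_mul, integral_finsetSum _ fun l _ =>
    (integrable_finsetSum _ fun k _ => hrow l k).mul_const _]
  simp only [integral_mul_const, integral_finsetSum _ fun k _ => hrow _ k, integral_const_mul,
    integral_vecMulVec_sub_gaussVec hh, mul_zero, zero_mul, Finset.sum_const_zero]

theorem sum_sum_mul_H2w {h : ℝ} (hh : h ≠ 0) (G : Mat d) (w : Vec d) :
    ∑ i, ∑ j, G i j * H2w σ h t x w i j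
      = H1w σ h t x w ⬝ᵥ G *ᵥ H1w σ h t x w - 1 / h * ((σ t x * (σ t x)ᵀ)⁻¹ * G).trace := by
  have hsymm : ((σ t x * (σ t x)ᵀ)⁻¹)ᵀ = (σ t x * (σ t x)ᵀ)⁻¹ := by
    rw [Matrix.transpose_nonsing_inv, Matrix.transpose_mul, Matrix.transpose_transpose]
  have htrace (N : Mat d) : ∑ i, ∑ j, G i j * N i j = (G * Nᵀ).trace :=
    Matrix.sum_hadamard_eq G N
  rw [htrace, H2w_eq_vecMulVec_sub σ t x hh, Matrix.transpose_sub, Matrix.transpose_smul, hsymm,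
    Matrix.transpose_vecMulVec, Matrix.mul_sub, Matrix.mul_smul, Matrix.mul_vecMulVec,
    Matrix.trace_sub, Matrix.trace_smul, Matrix.trace_vecMulVec, Matrix.trace_mul_comm G,
    dotProduct_comm, smul_eq_mul]

end Weights

/-! ### Stability of one step -/

section Discretization

variable {d : ℕ} (μ : ℝ → Vec d → Vec d) (σ : ℝ → Vec d → Mat d) (h t : ℝ) (ψ : Vec d → ℝ)
  (x : Vec d)

/-- The discretized value `𝒟⁰_h ψ (t, x) = E[ψ(X̂_h)]`. -/
def discreteMean : ℝ := ∫ w, ψ (euler μ σ h t x w) ∂gaussVec d h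

/-- The discretized gradient `𝒟¹_h ψ (t, x) = E[ψ(X̂_h) H₁]`. -/
def discreteGradient : Vec d := fun i => ∫ w, ψ (euler μ σ h t x w) * H1w σ h t x w i ∂gaussVec d h

/-- The discretized Hessian `𝒟²_h ψ (t, x) = E[ψ(X̂_h) H₂]`. -/
def discreteHessian : Mat d :=
  Matrix.of fun i j => ∫ w, ψ (euler μ σ h t x w) * H2w σ h t x w i j ∂gaussVec d h

theorem step_eq (F : ℝ → Vec d → ℝ → Vec d → Mat d → ℝ) :
    step F μ σ h t ψ x = discreteMean μ σ h t ψ x + h * F t x (discreteMean μ σ h t ψ x)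
      (discreteGradient μ σ h t ψ x) (discreteHessian μ σ h t ψ x) :=
  rfl

theorem continuous_euler : Continuous (euler μ σ h t x) := by
  unfold euler
  fun_prop

end Discretization

section Linearization

variable {d : ℕ} (σ : ℝ → Vec d → Mat d) (h t : ℝ) (x : Vec d)

/-- The random weight through which one step of the scheme, linearized with derivatives `c, b, G` of
`F` in `(r, p, γ)`, acts on the next-time function. -/
def stepWeight (c : ℝ) (b : Vec d) (G : Mat d) (w : Vec d) : ℝ :=
  1 + h * (c + b ⬝ᵥ H1w σ h t x w + ∑ i, ∑ j, G i j * H2w σ h t x w i j)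

/-- Since `H₂ = H₁ H₁ᵀ - a⁻¹ / h`, the weight equals `(1 - Tr (a⁻¹ G)) + h (c + b · v + v · G v)` at
`v = H₁`. -/
theorem neg_mul_le_stepWeight {h : ℝ} (hh : 0 < h) {c R K : ℝ} {b : Vec d} {G : Mat d}
    (hc : -R ≤ c) (htrace : ((σ t x * (σ t x)ᵀ)⁻¹ * G).trace ≤ 1)
    (hK : ∀ v : Vec d, -K ≤ b ⬝ᵥ v + v ⬝ᵥ G *ᵥ v) (w : Vec d) :
    -(h * (R + K)) ≤ stepWeight σ h t x c b G w := by
  set v := H1w σ h t x w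
  have hweight : stepWeight σ h t x c b G w
      = 1 - ((σ t x * (σ t x)ᵀ)⁻¹ * G).trace + h * (c + (b ⬝ᵥ v + v ⬝ᵥ G *ᵥ v)) := by
    rw [stepWeight, sum_sum_mul_H2w σ t x hh.ne']
    field_simp
    ring
  have hquad : h * (-R + -K) ≤ h * (c + (b ⬝ᵥ v + v ⬝ᵥ G *ᵥ v)) := by
    gcongr
    exact hK v
  linarith

theorem integrable_stepWeight (c : ℝ) (b : Vec d) (G : Mat d) :
    Integrable (stepWeight σ h t x c b G) (gaussVec d h) :=
  (integrable_const _).add <| Integrable.const_mul (((integrable_const _).add <|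
    integrable_finsetSum _ fun i _ => (integrable_H1w σ h t x i).const_mul _).add <|
    integrable_finsetSum _ fun i _ => integrable_finsetSum _ fun j _ =>
      (integrable_H2w σ h t x i j).const_mul _) _

theorem integral_mul_stepWeight {f : Vec d → ℝ} (hf : Measurable f) {B : ℝ} (hB : ∀ w, |f w| ≤ B)
    (c : ℝ) (b : Vec d) (G : Mat d) :
    ∫ w, f w * stepWeight σ h t x c b G w ∂gaussVec d h = ∫ w, f w ∂gaussVec d h
      + h * (c * ∫ w, f w ∂gaussVec d h
        + ∑ i, b i * ∫ w, f w * H1w σ h t x w i ∂gaussVec d h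
        + ∑ i, ∑ j, G i j * ∫ w, f w * H2w σ h t x w i j ∂gaussVec d h) := by
  have hbdd {u : Vec d → ℝ} (hu : Integrable u (gaussVec d h)) :
      Integrable (fun w => f w * u w) (gaussVec d h) :=
    hu.bdd_mul hf.aestronglyMeasurable (ae_of_all _ hB)
  have hf0 : Integrable f (gaussVec d h) := by simpa only [mul_one] using hbdd (integrable_const 1)
  have hf1 (i : Fin d) : Integrable (fun w => b i * (f w * H1w σ h t x w i)) (gaussVec d h) :=
    (hbdd (integrable_H1w σ h t x i)).const_mul _
  have hf2 (i j : Fin d) :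
      Integrable (fun w => G i j * (f w * H2w σ h t x w i j)) (gaussVec d h) :=
    (hbdd (integrable_H2w σ h t x i j)).const_mul _
  have hsum1 : Integrable (fun w => ∑ i, b i * (f w * H1w σ h t x w i)) (gaussVec d h) :=
    integrable_finsetSum _ fun i _ => hf1 i
  have hrow2 (i : Fin d) :
      Integrable (fun w => ∑ j, G i j * (f w * H2w σ h t x w i j)) (gaussVec d h) :=
    integrable_finsetSum _ fun j _ => hf2 i j
  have hsum2 : Integrable (fun w => ∑ i, ∑ j, G i j * (f w * H2w σ h t x w i j))
      (gaussVec d h) := integrable_finsetSum _ fun i _ => hrow2 i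
  have hsum01 : Integrable (fun w => c * f w + ∑ i, b i * (f w * H1w σ h t x w i))
      (gaussVec d h) := (hf0.const_mul c).add hsum1
  have hsum012 : Integrable (fun w => c * f w + ∑ i, b i * (f w * H1w σ h t x w i)
      + ∑ i, ∑ j, G i j * (f w * H2w σ h t x w i j)) (gaussVec d h) := hsum01.add hsum2
  have hexpand (w : Vec d) : f w * stepWeight σ h t x c b G w = f w + h * (c * f w
      + ∑ i, b i * (f w * H1w σ h t x w i) + ∑ i, ∑ j, G i j * (f w * H2w σ h t x w i j)) := by
    simp only [stepWeight, dotProduct, mul_left_comm _ (f w), ← Finset.mul_sum]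
    ring
  simp only [hexpand]
  rw [integral_add hf0 (hsum012.const_mul h), integral_const_mul,
    integral_add hsum01 hsum2, integral_add (hf0.const_mul c) hsum1, integral_const_mul,
    integral_finsetSum _ fun i _ => hf1 i, integral_finsetSum _ fun i _ => hrow2 i]
  simp only [integral_finsetSum _ fun j _ => hf2 _ j, integral_const_mul]

theorem integral_stepWeight {h : ℝ} (hh : 0 ≤ h) (c : ℝ) (b : Vec d) (G : Mat d) :
    ∫ w, stepWeight σ h t x c b G w ∂gaussVec d h = 1 + h * c := by
  have hone := integral_mul_stepWeight σ h t x (f := fun _ => 1) measurable_const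
    (fun _ => abs_one.le) c b G
  simpa only [one_mul, integral_const, probReal_univ, one_smul, mul_one, integral_H1w,
    integral_H2w σ t x hh, mul_zero, Finset.sum_const_zero, add_zero] using hone

end Linearization

theorem abs_integral_mul_le_of_neg_le {Ω : Type*} [MeasurableSpace Ω] {ν : Measure Ω}
    [IsProbabilityMeasure ν] {δ ω : Ω → ℝ} {M κ : ℝ} (hω : Integrable ω ν) (hκ : 0 ≤ κ)
    (hlow : ∀ w, -κ ≤ ω w) (hM : ∀ w, |δ w| ≤ M) :
    |∫ w, δ w * ω w ∂ν| ≤ M * (∫ w, ω w ∂ν + 2 * κ) := by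
  have hpointwise (w : Ω) : ‖δ w * ω w‖ ≤ M * (ω w + 2 * κ) := by
    have habs : |ω w| ≤ ω w + 2 * κ := abs_le.2 ⟨by linarith [hlow w], by linarith⟩
    exact norm_mul_le_of_le (hM w) habs
  calc |∫ w, δ w * ω w ∂ν| ≤ ∫ w, M * (ω w + 2 * κ) ∂ν :=
        norm_integral_le_of_norm_le ((hω.add (integrable_const _)).const_mul M)
          (ae_of_all _ hpointwise)
    _ = M * (∫ w, ω w ∂ν + 2 * κ) := by
        rw [integral_const_mul, integral_add hω (integrable_const _), integral_const,
          probReal_univ, one_smul]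

namespace AssumptionF

variable {d : ℕ} {σ : ℝ → Vec d → Mat d} {F Fr : ℝ → Vec d → ℝ → Vec d → Mat d → ℝ}
  {Fp : ℝ → Vec d → ℝ → Vec d → Mat d → Vec d} {Fγ : ℝ → Vec d → ℝ → Vec d → Mat d → Mat d}

theorem lipschitzWith_uncurry (hF : AssumptionF d σ F Fr Fp Fγ) : ∃ L : ℝ≥0, ∀ t,
    LipschitzWith L fun q : Vec d × ℝ × Vec d × Mat d => F t q.1 q.2.1 q.2.2.1 q.2.2.2 := by
  obtain ⟨L, hL, hLip⟩ := hF.lipschitz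
  refine ⟨(L * 4).toNNReal, fun t => LipschitzWith.of_dist_le_mul fun q q' => ?_⟩
  rw [Real.coe_toNNReal _ (by positivity), Real.dist_eq, dist_eq_norm]
  have hsnd : ‖q.2 - q'.2‖ ≤ ‖q - q'‖ := norm_snd_le (q - q')
  have hsnd' : ‖q.2.2 - q'.2.2‖ ≤ ‖q - q'‖ := (norm_snd_le (q.2 - q'.2)).trans hsnd
  have hx : ‖q.1 - q'.1‖ ≤ ‖q - q'‖ := norm_fst_le (q - q')
  have hr : |q.2.1 - q'.2.1| ≤ ‖q - q'‖ := (norm_fst_le (q.2 - q'.2)).trans hsnd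
  have hp : ‖q.2.2.1 - q'.2.2.1‖ ≤ ‖q - q'‖ := (norm_fst_le (q.2.2 - q'.2.2)).trans hsnd'
  have hγ : ‖q.2.2.2 - q'.2.2.2‖ ≤ ‖q - q'‖ := (norm_snd_le (q.2.2 - q'.2.2)).trans hsnd'
  calc _ ≤ L * (‖q.1 - q'.1‖ + |q.2.1 - q'.2.1| + ‖q.2.2.1 - q'.2.2.1‖
          + ‖q.2.2.2 - q'.2.2.2‖) := hLip t _ _ _ _ _ _ _ _
    _ ≤ L * (‖q - q'‖ + ‖q - q'‖ + ‖q - q'‖ + ‖q - q'‖) := by gcongr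
    _ = L * 4 * ‖q - q'‖ := by ring

theorem exists_abs_Fr_le (hF : AssumptionF d σ F Fr Fp Fγ) :
    ∃ R : ℝ, 0 ≤ R ∧ ∀ t x r p γ, |Fr t x r p γ| ≤ R := by
  obtain ⟨L, hL⟩ := hF.lipschitzWith_uncurry
  refine ⟨L, L.2, fun t x r p γ => ?_⟩
  have hLip : LipschitzWith L fun q : ℝ × Vec d × Mat d => F t x q.1 q.2.1 q.2.2 := by
    have hcomp := (hL t).comp (LipschitzWith.prodMk_left x)
    rwa [mul_one] at hcomp
  have hunit : ‖((1, 0, 0) : ℝ × Vec d × Mat d)‖ = 1 := by simp [Prod.norm_def]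
  calc |Fr t x r p γ|
      = ‖fderiv ℝ (fun q : ℝ × Vec d × Mat d => F t x q.1 q.2.1 q.2.2) (r, p, γ) (1, 0, 0)‖ := by
        simp [hF.deriv_eq]
    _ ≤ L * ‖((1, 0, 0) : ℝ × Vec d × Mat d)‖ :=
        ContinuousLinearMap.le_of_opNorm_le _ (norm_fderiv_le_of_lipschitz ℝ hLip) _
    _ = L := by rw [hunit, mul_one]

theorem exists_abs_le (hF : AssumptionF d σ F Fr Fp Fγ) :
    ∃ C : ℝ, 0 ≤ C ∧ ∀ t x r p γ, |F t x r p γ| ≤ C * (1 + |r| + ‖p‖ + ‖γ‖) := by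
  obtain ⟨L, hL, hLip⟩ := hF.lipschitz
  obtain ⟨C, hC⟩ := hF.bound_at_zero
  have hC0 : 0 ≤ C := (abs_nonneg _).trans (hC 0 0)
  refine ⟨C + L, by positivity, fun t x r p γ => ?_⟩
  have hincr : |F t x r p γ - F t x 0 0 0| ≤ L * (|r| + ‖p‖ + ‖γ‖) := by
    simpa only [sub_self, norm_zero, sub_zero, zero_add] using hLip t x x r 0 p 0 γ 0
  calc |F t x r p γ| ≤ |F t x 0 0 0| + |F t x r p γ - F t x 0 0 0| :=
        sub_le_iff_le_add'.1 (abs_sub_abs_le_abs_sub _ _)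
    _ ≤ C * (1 + 0) + L * (0 + (|r| + ‖p‖ + ‖γ‖)) := by
        rw [add_zero, mul_one, zero_add]
        exact add_le_add (hC t x) hincr
    _ ≤ C * (1 + (|r| + ‖p‖ + ‖γ‖)) + L * (1 + (|r| + ‖p‖ + ‖γ‖)) := by gcongr <;> positivity
    _ = (C + L) * (1 + |r| + ‖p‖ + ‖γ‖) := by ring

theorem exists_sub_eq (hF : AssumptionF d σ F Fr Fp Fγ) (t : ℝ) (x : Vec d) (r r' : ℝ)
    (p p' : Vec d) (γ γ' : Mat d) :
    ∃ r₀ p₀ γ₀, F t x r p γ - F t x r' p' γ'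
      = Fr t x r₀ p₀ γ₀ * (r - r') + Fp t x r₀ p₀ γ₀ ⬝ᵥ (p - p')
        + ∑ i, ∑ j, Fγ t x r₀ p₀ γ₀ i j * (γ - γ') i j := by
  obtain ⟨⟨r₀, p₀, γ₀⟩, -, hmvt⟩ := domain_mvt (s := univ) (x := (r', p', γ')) (y := (r, p, γ))
    (fun q _ => (hF.differentiable t x q.1 q.2.1 q.2.2).hasFDerivAt.hasFDerivWithinAt)
    convex_univ (mem_univ _) (mem_univ _)
  exact ⟨r₀, p₀, γ₀, hmvt.trans (hF.deriv_eq t x r₀ p₀ γ₀ _)⟩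

end AssumptionF

section Stability

variable {d : ℕ} {μ : ℝ → Vec d → Vec d} {σ : ℝ → Vec d → Mat d}

theorem integral_comp_euler_mul_stepWeight (h t : ℝ) (x : Vec d) {ψ : Vec d → ℝ}
    (hψ : Measurable ψ) {B : ℝ} (hB : ∀ y, |ψ y| ≤ B) (c : ℝ) (b : Vec d) (G : Mat d) :
    ∫ w, ψ (euler μ σ h t x w) * stepWeight σ h t x c b G w ∂gaussVec d h
      = discreteMean μ σ h t ψ x + h * (c * discreteMean μ σ h t ψ x
        + b ⬝ᵥ discreteGradient μ σ h t ψ x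
        + ∑ i, ∑ j, G i j * discreteHessian μ σ h t ψ x i j) :=
  integral_mul_stepWeight σ h t x (hψ.comp (continuous_euler μ σ h t x).measurable)
    (fun _ => hB _) c b G

variable {F Fr : ℝ → Vec d → ℝ → Vec d → Mat d → ℝ}
  {Fp : ℝ → Vec d → ℝ → Vec d → Mat d → Vec d} {Fγ : ℝ → Vec d → ℝ → Vec d → Mat d → Mat d}

theorem exists_step_sub_eq_integral (hF : AssumptionF d σ F Fr Fp Fγ) (h t : ℝ) (x : Vec d)
    {ψ φ : Vec d → ℝ} (hψ : Measurable ψ) (hφ : Measurable φ) {B B' : ℝ} (hψB : ∀ y, |ψ y| ≤ B)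
    (hφB : ∀ y, |φ y| ≤ B') :
    ∃ r p γ, step F μ σ h t ψ x - step F μ σ h t φ x
      = ∫ w, (ψ (euler μ σ h t x w) - φ (euler μ σ h t x w))
          * stepWeight σ h t x (Fr t x r p γ) (Fp t x r p γ) (Fγ t x r p γ) w ∂gaussVec d h := by
  obtain ⟨r, p, γ, hmvt⟩ := hF.exists_sub_eq t x
    (discreteMean μ σ h t ψ x) (discreteMean μ σ h t φ x)
    (discreteGradient μ σ h t ψ x) (discreteGradient μ σ h t φ x)
    (discreteHessian μ σ h t ψ x) (discreteHessian μ σ h t φ x)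
  refine ⟨r, p, γ, ?_⟩
  have hint {f : Vec d → ℝ} (hf : Measurable f) {C : ℝ} (hC : ∀ y, |f y| ≤ C) :
      Integrable (fun w => f (euler μ σ h t x w)
        * stepWeight σ h t x (Fr t x r p γ) (Fp t x r p γ) (Fγ t x r p γ) w) (gaussVec d h) :=
    (integrable_stepWeight σ h t x _ _ _).bdd_mul
      (hf.comp (continuous_euler μ σ h t x).measurable).aestronglyMeasurable
      (ae_of_all _ fun _ => hC _)
  simp only [sub_mul]
  rw [integral_sub (hint hψ hψB) (hint hφ hφB), integral_comp_euler_mul_stepWeight h t x hψ hψB,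
    integral_comp_euler_mul_stepWeight h t x hφ hφB, step_eq, step_eq]
  simp only [dotProduct_sub, Matrix.sub_apply, mul_sub, Finset.sum_sub_distrib] at hmvt
  linear_combination h * hmvt

theorem exists_abs_step_sub_le (hF : AssumptionF d σ F Fr Fp Fγ) :
    ∃ A : ℝ, 0 ≤ A ∧ ∀ h : ℝ, 0 < h → ∀ (t : ℝ) (ψ φ : Vec d → ℝ) (B M : ℝ), Measurable ψ →
      Measurable φ → (∀ x, |φ x| ≤ B) → (∀ x, |ψ x - φ x| ≤ M) →
      ∀ x, |step F μ σ h t ψ x - step F μ σ h t φ x| ≤ (1 + A * h) * M := by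
  obtain ⟨R, hR, hFr⟩ := hF.exists_abs_Fr_le
  obtain ⟨K, hK, hlow⟩ := hF.lower_bound
  refine ⟨3 * R + 2 * K, by positivity, fun h hh t ψ φ B M hψ hφ hφB hM x => ?_⟩
  have hψB (y : Vec d) : |ψ y| ≤ B + M :=
    (sub_le_iff_le_add'.1 (abs_sub_abs_le_abs_sub _ _)).trans (add_le_add (hφB y) (hM y))
  obtain ⟨r, p, γ, hstep⟩ := exists_step_sub_eq_integral (μ := μ) hF h t x hψ hφ hψB hφB
  have hM0 : 0 ≤ M := (abs_nonneg _).trans (hM x)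
  have hweight := neg_mul_le_stepWeight σ t x hh (neg_le_of_abs_le (hFr t x r p γ))
    (hF.trace_le_one t x r p γ) (hlow t x r p γ)
  calc |step F μ σ h t ψ x - step F μ σ h t φ x|
      ≤ M * (∫ w, stepWeight σ h t x (Fr t x r p γ) (Fp t x r p γ) (Fγ t x r p γ) w ∂gaussVec d h
          + 2 * (h * (R + K))) := by
        rw [hstep]
        exact abs_integral_mul_le_of_neg_le (integrable_stepWeight σ h t x _ _ _) (by positivity)
          hweight fun _ => hM _
    _ = M * (1 + h * Fr t x r p γ + 2 * (h * (R + K))) := by rw [integral_stepWeight σ t x hh.le]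
    _ ≤ M * (1 + h * R + 2 * (h * (R + K))) := by
        gcongr
        exact (le_abs_self _).trans (hFr t x r p γ)
    _ = (1 + (3 * R + 2 * K) * h) * M := by ring

end Stability

/-! ### Consistency of one step -/

section Consistency

variable {d : ℕ} {h : ℝ}

theorem integral_norm_sq_gaussVec (hh : 0 ≤ h) :
    ∫ w, ‖w‖ ^ 2 ∂gaussVec d h = h * ∫ w, ‖w‖ ^ 2 ∂gaussVec d 1 := by
  rw [integral_norm_pow_gaussVec hh, Real.sq_sqrt hh]

theorem integral_norm_pow_four_gaussVec (hh : 0 ≤ h) :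
    ∫ w, ‖w‖ ^ 4 ∂gaussVec d h = h ^ 2 * ∫ w, ‖w‖ ^ 4 ∂gaussVec d 1 := by
  rw [integral_norm_pow_gaussVec hh, show √h ^ 4 = (√h ^ 2) ^ 2 by ring, Real.sq_sqrt hh]

variable (μ : ℝ → Vec d → Vec d) (σ : ℝ → Vec d → Mat d) (t : ℝ) (x : Vec d)

theorem norm_mulVec_le_mul (A : Mat d) (w : Vec d) : ‖A *ᵥ w‖ ≤ d * ‖A‖ * ‖w‖ := by
  simpa only [Fintype.card_fin, mul_assoc] using norm_mulVec_le_card_mul A w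

variable {φ : Vec d → ℝ} {P : ℝ≥0} {B M : ℝ}

theorem abs_integral_comp_euler_mul_sub_le (hφ : Continuous φ) (hφB : ∀ y, |φ y| ≤ B) (hM : 0 ≤ M)
    (hdiff : HasSecondDiffBound M φ) {H : Vec d → ℝ} (hH : Integrable H (gaussVec d h))
    (heven : ∀ w, H (-w) = H w) (hmom : Integrable (fun w => ‖w‖ ^ 2 * |H w|) (gaussVec d h)) :
    |∫ w, φ (euler μ σ h t x w) * H w ∂gaussVec d h - φ (x + h • μ t x) * ∫ w, H w ∂gaussVec d h|
      ≤ M * (d * ‖σ t x‖) ^ 2 / 2 * ∫ w, ‖w‖ ^ 2 * |H w| ∂gaussVec d h :=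
  abs_integral_mul_sub_le_of_even hφ hφB hM hdiff (by fun_prop)
    (fun w => Matrix.mulVec_neg w (σ t x)) (norm_mulVec_le_mul (σ t x)) hH heven hmom _

theorem abs_discreteMean_sub_le (hh : 0 ≤ h) (hφ : LipschitzWith P φ) (hφB : ∀ y, |φ y| ≤ B)
    (hM : 0 ≤ M) (hdiff : HasSecondDiffBound M φ) :
    |discreteMean μ σ h t φ x - φ x| ≤ h * (P * ‖μ t x‖
      + M * ((d * ‖σ t x‖) ^ 2 / 2 * ∫ w, ‖w‖ ^ 2 ∂gaussVec d 1)) := by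
  have hdrift : |φ (x + h • μ t x) - φ x| ≤ P * (h * ‖μ t x‖) := by
    rw [← Real.norm_eq_abs]
    simpa only [add_sub_cancel_left, norm_smul, Real.norm_of_nonneg hh] using
      hφ.norm_sub_le (x + h • μ t x) x
  have hnoise : |discreteMean μ σ h t φ x - φ (x + h • μ t x)|
      ≤ M * (d * ‖σ t x‖) ^ 2 / 2 * (h * ∫ w, ‖w‖ ^ 2 ∂gaussVec d 1) := by
    have hsq := integrable_norm_pow_gaussVec (d := d) h 2
    simpa only [discreteMean, mul_one, abs_one, integral_const, probReal_univ, one_smul,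
      integral_norm_sq_gaussVec hh] using
      abs_integral_comp_euler_mul_sub_le μ σ t x hφ.continuous hφB hM hdiff
        (integrable_const (μ := gaussVec d h) (1 : ℝ)) (fun _ => rfl)
        (by simpa only [abs_one, mul_one] using hsq)
  calc |discreteMean μ σ h t φ x - φ x|
      ≤ |discreteMean μ σ h t φ x - φ (x + h • μ t x)| + |φ (x + h • μ t x) - φ x| :=
        abs_sub_le _ _ _
    _ ≤ M * (d * ‖σ t x‖) ^ 2 / 2 * (h * ∫ w, ‖w‖ ^ 2 ∂gaussVec d 1) + P * (h * ‖μ t x‖) :=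
        add_le_add hnoise hdrift
    _ = _ := by ring

theorem norm_discreteGradient_le (hh : 0 < h) (hφ : LipschitzWith P φ) (hφB : ∀ y, |φ y| ≤ B) :
    ‖discreteGradient μ σ h t φ x‖
      ≤ P * (d * ‖σ t x‖ * (d * ‖(σ t x)⁻¹‖) * ∫ w, ‖w‖ ^ 2 ∂gaussVec d 1) := by
  set y := x + h • μ t x
  have hincr (w : Vec d) : |φ (euler μ σ h t x w) - φ y| ≤ P * (d * ‖σ t x‖ * ‖w‖) := by
    refine (hφ.norm_sub_le _ _).trans ?_
    gcongr
    simpa only [euler, y, add_sub_cancel_left] using norm_mulVec_le_mul (σ t x) w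
  have : 0 ≤ ∫ w, ‖w‖ ^ 2 ∂gaussVec d 1 := integral_nonneg fun w => by positivity
  refine (pi_norm_le_iff_of_nonneg (by positivity)).2 fun i => ?_
  have hH := integrable_H1w σ h t x i
  have hφH : Integrable (fun w => φ (euler μ σ h t x w) * H1w σ h t x w i) (gaussVec d h) :=
    hH.bdd_mul (hφ.continuous.comp (continuous_euler μ σ h t x)).aestronglyMeasurable
      (ae_of_all _ fun _ => hφB _)
  have hcenter : discreteGradient μ σ h t φ x i
      = ∫ w, (φ (euler μ σ h t x w) - φ y) * H1w σ h t x w i ∂gaussVec d h := by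
    simp only [sub_mul]
    rw [integral_sub hφH (hH.const_mul _), integral_const_mul, integral_H1w, mul_zero, sub_zero,
      discreteGradient]
  have hpointwise (w : Vec d) : ‖(φ (euler μ σ h t x w) - φ y) * H1w σ h t x w i‖
      ≤ P * (d * ‖σ t x‖) * (d * ‖(σ t x)⁻¹‖ / h) * ‖w‖ ^ 2 := by
    refine (norm_mul_le_of_le (hincr w)
      ((norm_le_pi_norm _ i).trans (norm_H1w_le σ t x hh.le w))).trans_eq ?_
    ring
  calc ‖discreteGradient μ σ h t φ x i‖
      ≤ ∫ w, P * (d * ‖σ t x‖) * (d * ‖(σ t x)⁻¹‖ / h) * ‖w‖ ^ 2 ∂gaussVec d h := by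
        rw [hcenter]
        exact norm_integral_le_of_norm_le ((integrable_norm_pow_gaussVec h 2).const_mul _)
          (ae_of_all _ hpointwise)
    _ = P * (d * ‖σ t x‖ * (d * ‖(σ t x)⁻¹‖) * ∫ w, ‖w‖ ^ 2 ∂gaussVec d 1) := by
        rw [integral_const_mul, integral_norm_sq_gaussVec hh.le]
        field_simp

theorem norm_sq_mul_abs_H2w_le (i j : Fin d) (hh : 0 ≤ h) (w : Vec d) :
    ‖w‖ ^ 2 * |H2w σ h t x w i j|
      ≤ (d * ‖(σ t x)⁻¹‖ / h) ^ 2 * (‖w‖ ^ 4 + h * ‖w‖ ^ 2) :=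
  calc ‖w‖ ^ 2 * |H2w σ h t x w i j|
      ≤ ‖w‖ ^ 2 * ((d * ‖(σ t x)⁻¹‖ / h) ^ 2 * (‖w‖ ^ 2 + h)) := by
        gcongr
        exact (Matrix.norm_entry_le_entrywise_sup_norm _).trans (norm_H2w_le σ t x hh w)
    _ = (d * ‖(σ t x)⁻¹‖ / h) ^ 2 * (‖w‖ ^ 4 + h * ‖w‖ ^ 2) := by ring

theorem integrable_norm_pow_four_add_gaussVec (c : ℝ) :
    Integrable (fun w => ‖w‖ ^ 4 + c * ‖w‖ ^ 2) (gaussVec d h) :=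
  (integrable_norm_pow_gaussVec h 4).add ((integrable_norm_pow_gaussVec h 2).const_mul c)

theorem integrable_norm_sq_mul_abs_H2w (i j : Fin d) (hh : 0 ≤ h) :
    Integrable (fun w => ‖w‖ ^ 2 * |H2w σ h t x w i j|) (gaussVec d h) := by
  refine ((integrable_norm_pow_four_add_gaussVec h).const_mul
    ((d * ‖(σ t x)⁻¹‖ / h) ^ 2)).mono' ((Continuous.aestronglyMeasurable (by fun_prop)).mul
      (integrable_H2w σ h t x i j).abs.aestronglyMeasurable) (ae_of_all _ fun w => ?_)
  rw [Real.norm_of_nonneg (by positivity)]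
  exact norm_sq_mul_abs_H2w_le σ t x i j hh w

theorem integral_norm_sq_mul_abs_H2w_le (i j : Fin d) (hh : 0 < h) :
    ∫ w, ‖w‖ ^ 2 * |H2w σ h t x w i j| ∂gaussVec d h
      ≤ (d * ‖(σ t x)⁻¹‖) ^ 2 * (∫ w, ‖w‖ ^ 4 ∂gaussVec d 1 + ∫ w, ‖w‖ ^ 2 ∂gaussVec d 1) :=
  calc ∫ w, ‖w‖ ^ 2 * |H2w σ h t x w i j| ∂gaussVec d h
      ≤ ∫ w, (d * ‖(σ t x)⁻¹‖ / h) ^ 2 * (‖w‖ ^ 4 + h * ‖w‖ ^ 2) ∂gaussVec d h :=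
        integral_mono (integrable_norm_sq_mul_abs_H2w σ t x i j hh.le)
          ((integrable_norm_pow_four_add_gaussVec h).const_mul _)
          (norm_sq_mul_abs_H2w_le σ t x i j hh.le)
    _ = _ := by
        rw [integral_const_mul, integral_add (integrable_norm_pow_gaussVec h 4)
          ((integrable_norm_pow_gaussVec h 2).const_mul h), integral_const_mul,
          integral_norm_sq_gaussVec hh.le, integral_norm_pow_four_gaussVec hh.le]
        field_simp

theorem norm_discreteHessian_le (hh : 0 < h) (hφ : Continuous φ) (hφB : ∀ y, |φ y| ≤ B)
    (hM : 0 ≤ M) (hdiff : HasSecondDiffBound M φ) :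
    ‖discreteHessian μ σ h t φ x‖ ≤ M * ((d * ‖σ t x‖) ^ 2 / 2 * ((d * ‖(σ t x)⁻¹‖) ^ 2
      * (∫ w, ‖w‖ ^ 4 ∂gaussVec d 1 + ∫ w, ‖w‖ ^ 2 ∂gaussVec d 1))) := by
  have : 0 ≤ ∫ w, ‖w‖ ^ 4 ∂gaussVec d 1 := integral_nonneg fun w => by positivity
  have : 0 ≤ ∫ w, ‖w‖ ^ 2 ∂gaussVec d 1 := integral_nonneg fun w => by positivity
  refine (Matrix.norm_le_iff (by positivity)).2 fun i j => ?_
  have hcenter := abs_integral_comp_euler_mul_sub_le μ σ t x hφ hφB hM hdiff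
    (integrable_H2w σ h t x i j) (fun w => by rw [H2w_neg])
    (integrable_norm_sq_mul_abs_H2w σ t x i j hh.le)
  rw [integral_H2w σ t x hh.le, mul_zero, sub_zero] at hcenter
  calc ‖discreteHessian μ σ h t φ x i j‖
      ≤ M * (d * ‖σ t x‖) ^ 2 / 2 * ∫ w, ‖w‖ ^ 2 * |H2w σ h t x w i j| ∂gaussVec d h := hcenter
    _ ≤ M * (d * ‖σ t x‖) ^ 2 / 2 * ((d * ‖(σ t x)⁻¹‖) ^ 2
          * (∫ w, ‖w‖ ^ 4 ∂gaussVec d 1 + ∫ w, ‖w‖ ^ 2 ∂gaussVec d 1)) := by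
        gcongr
        exact integral_norm_sq_mul_abs_H2w_le σ t x i j hh
    _ = _ := by ring

end Consistency

section StepConsistency

variable {d : ℕ} {μ : ℝ → Vec d → Vec d} {σ : ℝ → Vec d → Mat d}

theorem abs_discreteMean_le {h t : ℝ} {φ : Vec d → ℝ} {B : ℝ} (hφB : ∀ y, |φ y| ≤ B) (x : Vec d) :
    |discreteMean μ σ h t φ x| ≤ B := by
  simpa only [discreteMean, probReal_univ, mul_one, Real.norm_eq_abs] using
    norm_integral_le_of_norm_le_const (μ := gaussVec d h) (C := B)
      (f := fun w => φ (euler μ σ h t x w)) (ae_of_all _ fun w => hφB _)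

theorem exists_discretization_le {m s s' : ℝ} (hμ : ∀ t x, ‖μ t x‖ ≤ m)
    (hσ : ∀ t x, ‖σ t x‖ ≤ s) (hσinv : ∀ t x, ‖(σ t x)⁻¹‖ ≤ s') :
    ∃ c : ℝ, 0 ≤ c ∧ ∀ h : ℝ, 0 < h → ∀ (t : ℝ) (φ : Vec d → ℝ) (P : ℝ≥0) (B M : ℝ), 0 ≤ M →
      LipschitzWith P φ → (∀ x, |φ x| ≤ B) → HasSecondDiffBound M φ →
      ∀ x, |discreteMean μ σ h t φ x - φ x| ≤ h * (P * c + M * c) ∧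
        ‖discreteGradient μ σ h t φ x‖ ≤ P * c ∧ ‖discreteHessian μ σ h t φ x‖ ≤ M * c := by
  have hm : 0 ≤ m := (norm_nonneg _).trans (hμ 0 0)
  have hs : 0 ≤ s := (norm_nonneg _).trans (hσ 0 0)
  have hs' : 0 ≤ s' := (norm_nonneg _).trans (hσinv 0 0)
  have hnonneg (k : ℕ) : 0 ≤ ∫ w, ‖w‖ ^ k ∂gaussVec d 1 := integral_nonneg fun w => by positivity
  obtain ⟨c₀, hc₀⟩ : ∃ c, c = (d * s) ^ 2 / 2 * ∫ w, ‖w‖ ^ 2 ∂gaussVec d 1 := ⟨_, rfl⟩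
  obtain ⟨c₁, hc₁⟩ : ∃ c, c = d * s * (d * s') * ∫ w, ‖w‖ ^ 2 ∂gaussVec d 1 := ⟨_, rfl⟩
  obtain ⟨c₂, hc₂⟩ : ∃ c, c = (d * s) ^ 2 / 2 * ((d * s') ^ 2
    * (∫ w, ‖w‖ ^ 4 ∂gaussVec d 1 + ∫ w, ‖w‖ ^ 2 ∂gaussVec d 1)) := ⟨_, rfl⟩
  have h₀ : 0 ≤ c₀ := hc₀ ▸ mul_nonneg (by positivity) (hnonneg 2)
  have h₁ : 0 ≤ c₁ := hc₁ ▸ mul_nonneg (by positivity) (hnonneg 2)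
  have h₂ : 0 ≤ c₂ := hc₂ ▸ mul_nonneg (by positivity)
    (mul_nonneg (by positivity) (add_nonneg (hnonneg 4) (hnonneg 2)))
  refine ⟨m + c₀ + c₁ + c₂, by positivity, fun h hh t φ P B M hM hφ hφB hdiff x => ⟨?_, ?_, ?_⟩⟩
  · refine (abs_discreteMean_sub_le μ σ t x hh.le hφ hφB hM hdiff).trans ?_
    gcongr
    · linarith [hμ t x]
    · refine le_trans (b := c₀) ?_ (by linarith)
      rw [hc₀]
      gcongr
      exact hσ t x
  · refine (norm_discreteGradient_le μ σ t x hh hφ hφB).trans ?_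
    gcongr
    refine le_trans (b := c₁) ?_ (by linarith)
    rw [hc₁]
    gcongr
    exacts [hσ t x, hσinv t x]
  · refine (norm_discreteHessian_le μ σ t x hh hφ.continuous hφB hM hdiff).trans ?_
    gcongr
    refine le_trans (b := c₂) ?_ (by linarith)
    rw [hc₂]
    gcongr
    exacts [hσ t x, hσinv t x]

theorem exists_abs_step_sub_self_le {F Fr : ℝ → Vec d → ℝ → Vec d → Mat d → ℝ}
    {Fp : ℝ → Vec d → ℝ → Vec d → Mat d → Vec d} {Fγ : ℝ → Vec d → ℝ → Vec d → Mat d → Mat d}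
    (hF : AssumptionF d σ F Fr Fp Fγ) {m s s' : ℝ} (hμ : ∀ t x, ‖μ t x‖ ≤ m)
    (hσ : ∀ t x, ‖σ t x‖ ≤ s) (hσinv : ∀ t x, ‖(σ t x)⁻¹‖ ≤ s') :
    ∃ D : ℝ, 0 ≤ D ∧ ∀ h : ℝ, 0 < h → ∀ (t : ℝ) (φ : Vec d → ℝ) (P : ℝ≥0) (B M : ℝ), 0 ≤ M →
      LipschitzWith P φ → (∀ x, |φ x| ≤ B) → HasSecondDiffBound M φ →
      ∀ x, |step F μ σ h t φ x - φ x| ≤ h * (D * (1 + B + P + M)) := by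
  obtain ⟨C, hC, hFC⟩ := hF.exists_abs_le
  obtain ⟨c, hc, hdiscr⟩ := exists_discretization_le hμ hσ hσinv
  refine ⟨c + C + C * c, by positivity, fun h hh t φ P B M hM hφ hφB hdiff x => ?_⟩
  obtain ⟨hmean, hgrad, hhess⟩ := hdiscr h hh t φ P B M hM hφ hφB hdiff x
  have hB : 0 ≤ B := (abs_nonneg _).trans (hφB x)
  set R := F t x (discreteMean μ σ h t φ x) (discreteGradient μ σ h t φ x)
    (discreteHessian μ σ h t φ x) with hR
  have hnonlinear : |R| ≤ C * (1 + B + P * c + M * c) :=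
    (hFC _ _ _ _ _).trans (by gcongr; exact abs_discreteMean_le hφB x)
  have hslack : 0 ≤ (c + C * c) * (1 + B) + C * (P + M) := by positivity
  calc |step F μ σ h t φ x - φ x| = |discreteMean μ σ h t φ x - φ x + h * R| := by
        rw [step_eq, ← hR, add_sub_right_comm]
    _ ≤ |discreteMean μ σ h t φ x - φ x| + |h * R| := abs_add_le _ _
    _ ≤ h * (P * c + M * c) + h * (C * (1 + B + P * c + M * c)) := by
        rw [abs_mul, abs_of_pos hh]
        gcongr
    _ = h * ((c + C + C * c) * (1 + B + P + M) - ((c + C * c) * (1 + B) + C * (P + M))) := by ring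
    _ ≤ h * ((c + C + C * c) * (1 + B + P + M)) := by gcongr; exact sub_le_self _ hslack

end StepConsistency

/-! ### Measurability of one step -/

section Measurability

variable {α : Type*} [MeasurableSpace α] {d : ℕ}

theorem measurable_det_of_apply {A : α → Mat d} (hA : ∀ i j, Measurable fun x => A x i j) :
    Measurable fun x => (A x).det := by
  simp only [Matrix.det_apply]
  fun_prop

theorem measurable_inv_apply {A : α → Mat d} (hA : ∀ i j, Measurable fun x => A x i j)
    (i j : Fin d) : Measurable fun x => (A x)⁻¹ i j := by
  have hadj : Measurable fun x => (A x).adjugate i j := by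
    simp only [Matrix.adjugate_apply]
    refine measurable_det_of_apply fun k l => ?_
    simp only [Matrix.updateRow_apply]
    split_ifs
    · exact measurable_const
    · exact hA k l
  simp only [Matrix.inv_def, Ring.inverse_eq_inv', Matrix.smul_apply, smul_eq_mul]
  exact (measurable_det_of_apply hA).inv.mul hadj

variable {μ : ℝ → Vec d → Vec d} {σ : ℝ → Vec d → Mat d} {t : ℝ}

theorem measurable_euler (hμ : Measurable (μ t)) (hσ : ∀ i j, Measurable fun x => σ t x i j)
    (h : ℝ) : Measurable fun q : Vec d × Vec d => euler μ σ h t q.1 q.2 := by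
  have (i j : Fin d) : Measurable fun q : Vec d × Vec d => σ t q.1 i j :=
    (hσ i j).comp measurable_fst
  refine measurable_pi_iff.2 fun i => ?_
  simp only [euler, Pi.add_apply, Pi.smul_apply, smul_eq_mul, Matrix.mulVec, dotProduct]
  fun_prop

theorem measurable_H1w (hσ : ∀ i j, Measurable fun x => σ t x i j) (h : ℝ) (i : Fin d) :
    Measurable fun q : Vec d × Vec d => H1w σ h t q.1 q.2 i := by
  have hentry (i j : Fin d) : Measurable fun q : Vec d × Vec d => (σ t q.1)ᵀ⁻¹ i j :=
    measurable_inv_apply (fun i j => (hσ j i).comp measurable_fst) i j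
  simp only [H1w, Pi.smul_apply, smul_eq_mul, Matrix.mulVec, dotProduct]
  exact (Finset.measurable_fun_sum _ fun k _ => (hentry i k).mul (by fun_prop)).const_mul _

theorem measurable_H2w (hσ : ∀ i j, Measurable fun x => σ t x i j) (h : ℝ) (i j : Fin d) :
    Measurable fun q : Vec d × Vec d => H2w σ h t q.1 q.2 i j := by
  have hleft (i j : Fin d) : Measurable fun q : Vec d × Vec d => (σ t q.1)ᵀ⁻¹ i j :=
    measurable_inv_apply (fun i j => (hσ j i).comp measurable_fst) i j
  have hright (i j : Fin d) : Measurable fun q : Vec d × Vec d => (σ t q.1)⁻¹ i j :=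
    measurable_inv_apply (fun i j => (hσ i j).comp measurable_fst) i j
  simp only [H2w, Matrix.smul_apply, Matrix.sub_apply, vecMulVec_apply, Matrix.mul_apply,
    smul_eq_mul]
  exact (Finset.measurable_fun_sum _ fun l _ => (Finset.measurable_fun_sum _ fun k _ =>
    (hleft i k).mul (by fun_prop)).mul (hright l j)).const_mul _

theorem measurable_step {F : ℝ → Vec d → ℝ → Vec d → Mat d → ℝ} (hμ : Measurable (μ t))
    (hσ : ∀ i j, Measurable fun x => σ t x i j) {L : ℝ≥0} (hF : LipschitzWith L
      fun q : Vec d × ℝ × Vec d × Mat d => F t q.1 q.2.1 q.2.2.1 q.2.2.2)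
    (h : ℝ) {ψ : Vec d → ℝ} (hψ : Measurable ψ) : Measurable (step F μ σ h t ψ) := by
  have hcomp := hψ.comp (measurable_euler hμ hσ h)
  have hmean : Measurable (discreteMean μ σ h t ψ) :=
    (hcomp.stronglyMeasurable.integral_prod_right' (ν := gaussVec d h)).measurable
  have hgrad : Measurable (discreteGradient μ σ h t ψ) := measurable_pi_iff.2 fun i =>
    ((hcomp.mul (measurable_H1w hσ h i)).stronglyMeasurable.integral_prod_right'
      (ν := gaussVec d h)).measurable
  have hhess : Measurable fun x i j => discreteHessian μ σ h t ψ x i j :=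
    measurable_pi_iff.2 fun i => measurable_pi_iff.2 fun j =>
      ((hcomp.mul (measurable_H2w hσ h i j)).stronglyMeasurable.integral_prod_right'
        (ν := gaussVec d h)).measurable
  have hFcont : Continuous fun q : Vec d × ℝ × Vec d × (Fin d → Fin d → ℝ) =>
      F t q.1 q.2.1 q.2.2.1 (Matrix.of q.2.2.2) := hF.continuous
  exact hmean.add ((hFcont.measurable.comp
    (measurable_id.prodMk (hmean.prodMk (hgrad.prodMk hhess)))).const_mul h)

end Measurability

/-! ### Iteration of the scheme -/

/-- A step operator on real functions that preserves measurability and expands uniform distances to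
bounded measurable functions by a factor at most `κ`. -/
structure IsStableStep {α : Type*} [MeasurableSpace α] (κ : ℝ) (S : (α → ℝ) → α → ℝ) : Prop where
  measurable : ∀ ψ, Measurable ψ → Measurable (S ψ)
  abs_sub_le : ∀ (ψ φ : α → ℝ) (B M : ℝ), Measurable ψ → Measurable φ → (∀ x, |φ x| ≤ B) →
    (∀ x, |ψ x - φ x| ≤ M) → ∀ x, |S ψ x - S φ x| ≤ κ * M

theorem IsStableStep.abs_sub_le_of_recursion {α : Type*} [MeasurableSpace α] {κ : ℝ} (hκ : 1 ≤ κ)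
    {S : ℕ → (α → ℝ) → α → ℝ} (hS : ∀ k, IsStableStep κ (S k)) {u : ℕ → α → ℝ}
    (hu : ∀ k, u (k + 1) = S k (u k)) (hu0 : Measurable (u 0)) {φ : α → ℝ} (hφ : Measurable φ)
    {B : ℝ} (hφB : ∀ x, |φ x| ≤ B) {ρ η : ℝ} (hρ : ∀ x, |u 0 x - φ x| ≤ ρ)
    (hη : ∀ k x, |S k φ x - φ x| ≤ η) (k : ℕ) (x : α) :
    |u k x - φ x| ≤ κ ^ k * (ρ + k * η) := by
  have hmeas (k : ℕ) : Measurable (u k) := by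
    induction k with
    | zero => exact hu0
    | succ k ih =>
      rw [hu]
      exact (hS k).measurable _ ih
  induction k generalizing x with
  | zero => simpa only [pow_zero, one_mul, Nat.cast_zero, zero_mul, add_zero] using hρ x
  | succ k ih =>
    have hη0 : 0 ≤ η := (abs_nonneg _).trans (hη 0 x)
    calc |u (k + 1) x - φ x| ≤ |S k (u k) x - S k φ x| + |S k φ x - φ x| := by
          rw [hu]
          exact _root_.abs_sub_le _ _ _
      _ ≤ κ * (κ ^ k * (ρ + k * η)) + η :=
          add_le_add ((hS k).abs_sub_le (u k) φ B _ (hmeas k) hφ hφB ih x) (hη k x)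
      _ ≤ κ * (κ ^ k * (ρ + k * η)) + κ ^ (k + 1) * η := by
          gcongr
          exact le_mul_of_one_le_left hη0 (one_le_pow₀ hκ)
      _ = κ ^ (k + 1) * (ρ + (k + 1 : ℕ) * η) := by
          push_cast
          ring

theorem one_add_mul_pow_le_exp {a h T : ℝ} {j : ℕ} (ha : 0 ≤ a) (hh : 0 ≤ h) (hj : j * h ≤ T) :
    (1 + a * h) ^ j ≤ Real.exp (a * T) :=
  calc (1 + a * h) ^ j ≤ Real.exp (a * h) ^ j := by
        gcongr
        linarith [Real.add_one_le_exp (a * h)]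
    _ = Real.exp (a * (j * h)) := by rw [← Real.exp_nat_mul, mul_left_comm]
    _ ≤ Real.exp (a * T) := by gcongr

section Scheme

variable {d : ℕ} {μ : ℝ → Vec d → Vec d} {σ : ℝ → Vec d → Mat d}
  {F Fr : ℝ → Vec d → ℝ → Vec d → Mat d → ℝ} {Fp : ℝ → Vec d → ℝ → Vec d → Mat d → Vec d}
  {Fγ : ℝ → Vec d → ℝ → Vec d → Mat d → Mat d}

theorem exists_isStableStep_step (hF : AssumptionF d σ F Fr Fp Fγ) (hμ : ∀ t, Measurable (μ t))
    (hσ : ∀ t i j, Measurable fun x => σ t x i j) :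
    ∃ A : ℝ, 0 ≤ A ∧ ∀ h : ℝ, 0 < h → ∀ t, IsStableStep (1 + A * h) (step F μ σ h t) := by
  obtain ⟨L, hL⟩ := hF.lipschitzWith_uncurry
  obtain ⟨A, hA, hstab⟩ := exists_abs_step_sub_le (μ := μ) hF
  exact ⟨A, hA, fun h hh t =>
    ⟨fun _ hψ => measurable_step (hμ t) (hσ t) (hL t) h hψ, hstab h hh t⟩⟩

theorem exists_abs_step_sub_self_le_of_mollification (hF : AssumptionF d σ F Fr Fp Fγ)
    {m s s' : ℝ} (hμ : ∀ t x, ‖μ t x‖ ≤ m) (hσ : ∀ t x, ‖σ t x‖ ≤ s)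
    (hσinv : ∀ t x, ‖(σ t x)⁻¹‖ ≤ s') {g : Vec d → ℝ} {B : ℝ} (hgB : ∀ x, |g x| ≤ B) {L : ℝ≥0}
    (hg : LipschitzWith L g) :
    ∃ N : ℝ, 0 ≤ N ∧ ∀ ε : ℝ, 0 < ε → ∃ φ : Vec d → ℝ, Continuous φ ∧
      (∀ x, |φ x - g x| ≤ 2 * L * ε) ∧ ∀ h : ℝ, 0 < h → ∀ t x,
        |step F μ σ h t φ x - φ x| ≤ h * (N * (1 + ε + 1 / ε)) := by
  obtain ⟨D, hD, hcons⟩ := exists_abs_step_sub_self_le hF hμ hσ hσinv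
  obtain ⟨c, hmoll⟩ := exists_mollification (Vec d)
  have hB : 0 ≤ B := (abs_nonneg _).trans (hgB 0)
  refine ⟨D * (1 + B + 3 * L + c * L), by positivity, fun ε hε => ?_⟩
  obtain ⟨φ, hφL, hφg, hφdiff⟩ := hmoll L g hg ε hε
  refine ⟨φ, hφL.continuous, hφg, fun h hh t x => ?_⟩
  have hφB (y : Vec d) : |φ y| ≤ B + 2 * L * ε :=
    (sub_le_iff_le_add'.1 (abs_sub_abs_le_abs_sub _ _)).trans (add_le_add (hgB y) (hφg y))
  have hslack : 0 ≤ 2 * L + c * L + (1 + B + L + c * L) * ε + (1 + B + 3 * L) * (1 / ε) := by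
    positivity
  calc |step F μ σ h t φ x - φ x|
      ≤ h * (D * (1 + (B + 2 * L * ε) + L + c * L / ε)) :=
        hcons h hh t φ L _ _ (by positivity) hφL hφB hφdiff x
    _ ≤ h * (D * (1 + (B + 2 * L * ε) + L + c * L / ε
          + (2 * L + c * L + (1 + B + L + c * L) * ε + (1 + B + 3 * L) * (1 / ε)))) :=
        mul_le_mul_of_nonneg_left (mul_le_mul_of_nonneg_left (le_add_of_nonneg_right hslack) hD)
          hh.le
    _ = h * (D * (1 + B + 3 * L + c * L) * (1 + ε + 1 / ε)) := by ring

theorem exists_abs_schemeAux_sub_le (hF : AssumptionF d σ F Fr Fp Fγ) {m s s' : ℝ}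
    (hμ : ∀ t x, ‖μ t x‖ ≤ m) (hσ : ∀ t x, ‖σ t x‖ ≤ s) (hσinv : ∀ t x, ‖(σ t x)⁻¹‖ ≤ s')
    (hμmeas : ∀ t, Measurable (μ t)) (hσmeas : ∀ t i j, Measurable fun x => σ t x i j)
    {g : Vec d → ℝ} {B : ℝ} (hgB : ∀ x, |g x| ≤ B) {L : ℝ≥0} (hg : LipschitzWith L g)
    {T : ℝ} (hT : 0 < T) :
    ∃ C : ℝ, 0 ≤ C ∧ ∀ n : ℕ, 0 < n → ∀ j : ℕ, j * (T / n) ≤ T → ∀ ε : ℝ, 0 < ε → ∀ x,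
      |schemeAux T F μ σ g n j x - g x| ≤ C * (ε + j * (T / n) * (1 + ε + 1 / ε)) := by
  obtain ⟨A, hA, hstable⟩ := exists_isStableStep_step hF hμmeas hσmeas
  obtain ⟨N, hN, hmoll⟩ := exists_abs_step_sub_self_le_of_mollification hF hμ hσ hσinv hgB hg
  refine ⟨Real.exp (A * T) * (2 * L + N) + 2 * L, by positivity, fun n hn j hj ε hε x => ?_⟩
  have hh : 0 < T / n := by positivity
  obtain ⟨φ, hφ, hφg, hcons⟩ := hmoll ε hε
  have hφB (y : Vec d) : |φ y| ≤ B + 2 * L * ε :=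
    (sub_le_iff_le_add'.1 (abs_sub_abs_le_abs_sub _ _)).trans (add_le_add (hgB y) (hφg y))
  have hiter : |schemeAux T F μ σ g n j x - φ x| ≤ (1 + A * (T / n)) ^ j *
      (2 * L * ε + j * (T / n * (N * (1 + ε + 1 / ε)))) :=
    IsStableStep.abs_sub_le_of_recursion (le_add_of_nonneg_right (by positivity))
      (fun k => hstable _ hh (T - (k + 1) * (T / n))) (fun _ => rfl) hg.continuous.measurable
      hφ.measurable hφB (fun y => (abs_sub_comm _ _).trans_le (hφg y)) (fun _ => hcons _ hh _) j x
  obtain ⟨τ, hτ⟩ : ∃ τ, τ = j * (T / n) := ⟨_, rfl⟩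
  have hτ0 : 0 ≤ τ := hτ ▸ by positivity
  have hε' : ε ≤ ε + τ * (1 + ε + 1 / ε) := le_add_of_nonneg_right (by positivity)
  have hτ' : τ * (1 + ε + 1 / ε) ≤ ε + τ * (1 + ε + 1 / ε) := le_add_of_nonneg_left hε.le
  rw [← hτ]
  calc |schemeAux T F μ σ g n j x - g x|
      ≤ |schemeAux T F μ σ g n j x - φ x| + |φ x - g x| := abs_sub_le _ _ _
    _ ≤ Real.exp (A * T) * (2 * L * ε + j * (T / n * (N * (1 + ε + 1 / ε)))) + 2 * L * ε := by
        refine add_le_add (hiter.trans ?_) (hφg x)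
        gcongr
        exact one_add_mul_pow_le_exp hA hh.le hj
    _ = Real.exp (A * T) * (2 * L * ε + N * (τ * (1 + ε + 1 / ε))) + 2 * L * ε := by
        rw [hτ]
        ring
    _ ≤ Real.exp (A * T) * ((2 * L + N) * (ε + τ * (1 + ε + 1 / ε)))
          + 2 * L * (ε + τ * (1 + ε + 1 / ε)) := by
        rw [add_mul (2 * (L : ℝ))]
        gcongr
    _ = (Real.exp (A * T) * (2 * L + N) + 2 * L) * (ε + τ * (1 + ε + 1 / ε)) := by ring

end Scheme

theorem sqrt_add_mul_le {τ T : ℝ} (hτ : 0 < τ) (hτT : τ ≤ T) :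
    √τ + τ * (1 + √τ + 1 / √τ) ≤ (2 + √T + T) * √τ := by
  have : 0 < √τ := Real.sqrt_pos.2 hτ
  calc √τ + τ * (1 + √τ + 1 / √τ) = √τ + √τ ^ 2 * (1 + √τ + 1 / √τ) := by rw [Real.sq_sqrt hτ.le]
    _ = (2 + √τ + √τ ^ 2) * √τ := by
        field_simp
        ring
    _ ≤ (2 + √T + T) * √τ := by
        rw [Real.sq_sqrt hτ.le]
        gcongr

theorem continuous_of_norm_sub_le_add_sqrt {E G : Type*} [SeminormedAddCommGroup E]
    [SeminormedAddCommGroup G] {f : ℝ → E → G} {L : ℝ}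
    (hf : ∀ s s' y y', ‖f s y - f s' y'‖ ≤ L * (‖y - y'‖ + √|s - s'|)) (s : ℝ) :
    Continuous (f s) := by
  refine (LipschitzWith.of_dist_le' (K := L) fun y y' => ?_).continuous
  simpa only [dist_eq_norm, sub_self, abs_zero, Real.sqrt_zero, add_zero] using hf s s y y'

theorem scheme_terminal_condition_general
    (d : ℕ) (T : ℝ) (hT : 0 < T)
    (μ : ℝ → Vec d → Vec d) (σ : ℝ → Vec d → Mat d)
    (hμbdd : ∃ C : ℝ, ∀ s y, ‖μ s y‖ ≤ C)
    (hσbdd : ∃ C : ℝ, ∀ s y, ‖σ s y‖ ≤ C)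
    (hμmeas : ∀ s, Measurable (μ s))
    (hσmeas : ∀ s i j, Measurable fun y => σ s y i j)
    (_hσinv : ∀ s y, IsUnit (σ s y).det)
    (hσinvbdd : ∃ C : ℝ, ∀ s y, ‖(σ s y)⁻¹‖ ≤ C)
    (F Fr : ℝ → Vec d → ℝ → Vec d → Mat d → ℝ)
    (Fp : ℝ → Vec d → ℝ → Vec d → Mat d → Vec d)
    (Fγ : ℝ → Vec d → ℝ → Vec d → Mat d → Mat d)
    (hF : AssumptionF d σ F Fr Fp Fγ)
    (g : Vec d → ℝ) (hgbdd : ∃ Cg : ℝ, ∀ x, |g x| ≤ Cg)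
    (hglip : ∃ Lg : NNReal, LipschitzWith Lg g) :
    ∃ C > (0 : ℝ), ∀ n : ℕ, 0 < n → ∀ k : ℕ, k ≤ n → ∀ x : Vec d,
      |vh T F μ σ g n k x - g x| ≤ C * Real.sqrt (T - k * (T / n)) := by
  obtain ⟨m, hm⟩ := hμbdd
  obtain ⟨s, hs⟩ := hσbdd
  obtain ⟨s', hs'⟩ := hσinvbdd
  obtain ⟨B, hgB⟩ := hgbdd
  obtain ⟨L, hg⟩ := hglip
  obtain ⟨C, hC, hscheme⟩ := exists_abs_schemeAux_sub_le hF hm hs hs' hμmeas hσmeas hgB hg hT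
  refine ⟨C * (2 + √T + T) + 1, by positivity, fun n hn k hk x => ?_⟩
  have hτ : T - k * (T / n) = (n - k : ℕ) * (T / n) := by
    rw [Nat.cast_sub hk]
    field_simp
  rcases hk.eq_or_lt with rfl | hkn
  · simpa [vh, schemeAux] using by positivity
  have hτ0 : 0 < T - k * (T / n) := by
    have := Nat.sub_pos_of_lt hkn
    rw [hτ]
    positivity
  have hτT : T - k * (T / n) ≤ T := sub_le_self _ (by positivity)
  calc |vh T F μ σ g n k x - g x|
      ≤ C * (√(T - k * (T / n)) + (T - k * (T / n)) * (1 + √(T - k * (T / n))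
          + 1 / √(T - k * (T / n)))) := by
        simpa only [hτ, vh] using hscheme n hn (n - k) (hτ ▸ hτT) _ (Real.sqrt_pos.2 hτ0) x
    _ ≤ C * ((2 + √T + T) * √(T - k * (T / n))) := by
        gcongr
        exact sqrt_add_mul_le hτ0 hτT
    _ ≤ (C * (2 + √T + T) + 1) * √(T - k * (T / n)) := by
        rw [← mul_assoc, add_mul (C * (2 + √T + T))]
        exact le_add_of_nonneg_right (by positivity)

/-- Convergence to the terminal condition (Lemma 3.20 of the paper):
`|v^h(t_k, x) − g(x)| ≤ C (T − t_k)^{1/2}` with `C` independent of `n`. -/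
theorem scheme_terminal_condition
    (d : ℕ) (T : ℝ) (hT : 0 < T)
    (μ : ℝ → Vec d → Vec d) (σ : ℝ → Vec d → Mat d)
    (hμbdd : ∃ C : ℝ, ∀ s y, ‖μ s y‖ ≤ C)
    (hσbdd : ∃ C : ℝ, ∀ s y, ‖σ s y‖ ≤ C)
    (hμreg : ∃ L : ℝ, ∀ s s' : ℝ, ∀ y y' : Vec d,
      ‖μ s y - μ s' y'‖ ≤ L * (‖y - y'‖ + Real.sqrt |s - s'|))
    (hσreg : ∃ L : ℝ, ∀ s s' : ℝ, ∀ y y' : Vec d,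
      ‖σ s y - σ s' y'‖ ≤ L * (‖y - y'‖ + Real.sqrt |s - s'|))
    (hσinv : ∀ s y, IsUnit (σ s y).det)
    (hσinvbdd : ∃ C : ℝ, ∀ s y, ‖(σ s y)⁻¹‖ ≤ C)
    (F Fr : ℝ → Vec d → ℝ → Vec d → Mat d → ℝ)
    (Fp : ℝ → Vec d → ℝ → Vec d → Mat d → Vec d)
    (Fγ : ℝ → Vec d → ℝ → Vec d → Mat d → Mat d)
    (hF : AssumptionF d σ F Fr Fp Fγ)
    (g : Vec d → ℝ) (hgbdd : ∃ Cg : ℝ, ∀ x, |g x| ≤ Cg)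
    (hglip : ∃ Lg : NNReal, LipschitzWith Lg g) :
    ∃ C > (0 : ℝ), ∀ n : ℕ, 0 < n → ∀ k : ℕ, k ≤ n → ∀ x : Vec d,
      |vh T F μ σ g n k x - g x| ≤ C * Real.sqrt (T - k * (T / n)) := by
  obtain ⟨Lμ, hLμ⟩ := hμreg
  obtain ⟨Lσ, hLσ⟩ := hσreg
  exact scheme_terminal_condition_general d T hT μ σ hμbdd hσbdd
    (fun s => (continuous_of_norm_sub_le_add_sqrt hLμ s).measurable)
    (fun s i j => ((continuous_of_norm_sub_le_add_sqrt hLσ s).matrix_elem i j).measurable)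
    hσinv hσinvbdd F Fr Fp Fγ hF g hgbdd hglip

end
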